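/- Let x ~ N(0, I_{d×d}) be standard Gaussian, ξ a noise independent of x, θ* ∈ R^d a fixed vector with ‖θ*‖₂ = 1, y = f(⟨x, θ*⟩, ξ) for a measurable f, and set η = E[y⟨x, θ*⟩]. Then argmin over θ ∈ R^d of E[(y − ⟨θ, x⟩)²] equals η θ*. -/

import Mathlib

open MeasureTheory ProbabilityTheory Real

noncomputable section

/-!
Only the component of `Z` along `X` correlates with `Y = f(X, ξ)`: for jointly Gaussian `(X, Z)` the
combination `Var[X] Z - cov[X, Z] X` is uncorrelated with `X`, hence independent of `X`, hence
independent of `(X, ξ)` and of `Y`. This is Bussgang's identity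
`Var[X] cov[Y, Z] = cov[X, Z] cov[Y, X]`. For `X = ⟨x, θ*⟩` and `Z = ⟨x, θ⟩` it says that the
residual `Y - (E[Y X] / Var[X]) X` is orthogonal in `L²` to every linear functional of `x`, so by
Pythagoras the risk of `θ` exceeds the least risk by the squared `L²` distance between the two
predictors.
-/

section Independence

variable {Ω α β γ : Type*} [MeasurableSpace Ω] [MeasurableSpace α] [MeasurableSpace β]
  [MeasurableSpace γ]

theorem measurePreserving_prod_right_comm (μ : Measure α) (ν : Measure β) (τ : Measure γ)
    [SFinite μ] [SFinite ν] [SFinite τ] :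
    MeasurePreserving (fun p : (α × β) × γ ↦ ((p.1.1, p.2), p.1.2))
      ((μ.prod ν).prod τ) ((μ.prod τ).prod ν) :=
  (measurePreserving_prodAssoc μ τ ν).symm.comp
    (((MeasurePreserving.id μ).prod Measure.measurePreserving_swap).comp
      (measurePreserving_prodAssoc μ ν τ))

theorem indepFun_prodMk_right_comm {P : Measure Ω} [IsFiniteMeasure P]
    {A : Ω → α} {B : Ω → β} {C : Ω → γ}
    (hA : AEMeasurable A P) (hB : AEMeasurable B P) (hC : AEMeasurable C P)
    (hAB : IndepFun A B P) (hABC : IndepFun (fun ω ↦ (A ω, B ω)) C P) :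
    IndepFun (fun ω ↦ (A ω, C ω)) B P := by
  have hAC : IndepFun A C P := hABC.comp measurable_fst measurable_id
  have hlaw : HasLaw (fun ω ↦ ((A ω, B ω), C ω)) (((P.map A).prod (P.map B)).prod (P.map C)) P :=
    ⟨by fun_prop, by
      rw [hABC.map_prod_eq_prod_map_map (by fun_prop) hC, hAB.map_prod_eq_prod_map_map hA hB]⟩
  rw [indepFun_iff_map_prod_eq_prod_map_map (by fun_prop) hB, hAC.map_prod_eq_prod_map_map hA hC]
  exact ((measurePreserving_prod_right_comm _ _ _).comp_hasLaw hlaw).map_eq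

end Independence

theorem integral_sub_sq_of_integral_mul_eq_zero {Ω : Type*} [MeasurableSpace Ω]
    {P : Measure Ω} {U V : Ω → ℝ} (hU : MemLp U 2 P) (hV : MemLp V 2 P)
    (hUV : ∫ ω, U ω * V ω ∂P = 0) :
    ∫ ω, (U ω - V ω) ^ 2 ∂P = ∫ ω, U ω ^ 2 ∂P + ∫ ω, V ω ^ 2 ∂P := by
  have hUVi : Integrable (fun ω ↦ 2 * (U ω * V ω)) P := (hU.integrable_mul hV).const_mul 2
  simp_rw [sub_sq, mul_assoc]
  rw [integral_add (hU.integrable_sq.sub' hUVi) hV.integrable_sq,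
    integral_sub hU.integrable_sq hUVi, integral_const_mul, hUV, mul_zero, sub_zero]

section GaussianPair

variable {Ω S : Type*} [MeasurableSpace Ω] [MeasurableSpace S] {P : Measure Ω}
  {X Z Y : Ω → ℝ} {ξ : Ω → S} {f : ℝ → S → ℝ}

theorem indepFun_of_hasGaussianLaw_of_covariance_eq_zero
    (hXZ : HasGaussianLaw (fun ω ↦ (X ω, Z ω)) P) (hξ : AEMeasurable ξ P)
    (hind : IndepFun (fun ω ↦ (X ω, Z ω)) ξ P)
    (hf : Measurable (Function.uncurry f)) (hY : ∀ ω, Y ω = f (X ω) (ξ ω))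
    (hcov : cov[X, Z; P] = 0) : IndepFun Y Z P := by
  have := hXZ.isProbabilityMeasure
  obtain rfl : Y = Function.uncurry f ∘ fun ω ↦ (X ω, ξ ω) := funext hY
  exact (indepFun_prodMk_right_comm hXZ.fst.aemeasurable hXZ.snd.aemeasurable hξ
    (hXZ.indepFun_of_covariance_eq_zero hcov) hind).comp hf measurable_id

theorem variance_mul_covariance_eq_covariance_mul_covariance
    (hXZ : HasGaussianLaw (fun ω ↦ (X ω, Z ω)) P) (hξ : AEMeasurable ξ P)
    (hind : IndepFun (fun ω ↦ (X ω, Z ω)) ξ P)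
    (hf : Measurable (Function.uncurry f)) (hY : ∀ ω, Y ω = f (X ω) (ξ ω)) (hY2 : MemLp Y 2 P) :
    Var[X; P] * cov[Y, Z; P] = cov[X, Z; P] * cov[Y, X; P] := by
  have := hXZ.isProbabilityMeasure
  have hX2 : MemLp X 2 P := hXZ.fst.memLp_two
  have hZ2 : MemLp Z 2 P := hXZ.snd.memLp_two
  set a := Var[X; P] with ha
  set b := cov[X, Z; P] with hb
  let L : ℝ × ℝ →L[ℝ] ℝ × ℝ := (ContinuousLinearMap.fst ℝ ℝ ℝ).prod
    (a • ContinuousLinearMap.snd ℝ ℝ ℝ - b • ContinuousLinearMap.fst ℝ ℝ ℝ)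
  have hcov_sub (W : Ω → ℝ) (hW : MemLp W 2 P) :
      cov[W, fun ω ↦ a * Z ω - b * X ω; P] = a * cov[W, Z; P] - b * cov[W, X; P] := by
    rw [covariance_fun_sub_right hW (hZ2.const_mul a) (hX2.const_mul b),
      covariance_const_mul_right, covariance_const_mul_right]
  have hindYZ : IndepFun Y (fun ω ↦ a * Z ω - b * X ω) P := by
    refine indepFun_of_hasGaussianLaw_of_covariance_eq_zero (hXZ.map_fun L) hξ
      (hind.comp L.measurable measurable_id) hf hY ?_
    change cov[X, fun ω ↦ a * Z ω - b * X ω; P] = 0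
    rw [hcov_sub X hX2, covariance_self hX2.aemeasurable, ← ha, ← hb]
    ring
  have h := hindYZ.covariance_eq_zero hY2 ((hZ2.const_mul a).sub (hX2.const_mul b))
  rw [hcov_sub Y hY2] at h
  linarith

theorem integral_sub_sq_of_hasGaussianLaw (hXZ : HasGaussianLaw (fun ω ↦ (X ω, Z ω)) P)
    (hX0 : ∫ ω, X ω ∂P = 0) (hZ0 : ∫ ω, Z ω ∂P = 0) (hX : Var[X; P] ≠ 0)
    (hξ : AEMeasurable ξ P) (hind : IndepFun (fun ω ↦ (X ω, Z ω)) ξ P)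
    (hf : Measurable (Function.uncurry f)) (hY : ∀ ω, Y ω = f (X ω) (ξ ω)) (hY2 : MemLp Y 2 P) :
    ∫ ω, (Y ω - Z ω) ^ 2 ∂P =
      ∫ ω, (Y ω - (∫ ω', Y ω' * X ω' ∂P) / Var[X; P] * X ω) ^ 2 ∂P +
        Var[fun ω ↦ Z ω - (∫ ω', Y ω' * X ω' ∂P) / Var[X; P] * X ω; P] := by
  have := hXZ.isProbabilityMeasure
  have hX2 : MemLp X 2 P := hXZ.fst.memLp_two
  have hZ2 : MemLp Z 2 P := hXZ.snd.memLp_two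
  have hYX : ∫ ω, Y ω * X ω ∂P = cov[Y, X; P] := by
    simp [covariance_eq_sub hY2 hX2, hX0]
  set c := (∫ ω', Y ω' * X ω' ∂P) / Var[X; P] with hc
  have hcX2 : MemLp (fun ω ↦ c * X ω) 2 P := hX2.const_mul c
  have hU2 : MemLp (fun ω ↦ Y ω - c * X ω) 2 P := hY2.sub hcX2
  have hV2 : MemLp (fun ω ↦ Z ω - c * X ω) 2 P := hZ2.sub hcX2
  have hV0 : ∫ ω, Z ω - c * X ω ∂P = 0 := by
    rw [integral_sub (hZ2.integrable one_le_two) (hcX2.integrable one_le_two), integral_const_mul,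
      hX0, hZ0, mul_zero, sub_zero]
  have hcov : cov[fun ω ↦ Y ω - c * X ω, fun ω ↦ Z ω - c * X ω; P] = 0 := by
    rw [covariance_fun_sub_fun_sub hY2 hcX2 hZ2 hcX2]
    simp only [covariance_const_mul_left, covariance_const_mul_right,
      covariance_self hX2.aemeasurable]
    have hbussgang := variance_mul_covariance_eq_covariance_mul_covariance hXZ hξ hind hf hY hY2
    rw [hc, hYX]
    field_simp
    linear_combination hbussgang
  have horth : ∫ ω, (Y ω - c * X ω) * (Z ω - c * X ω) ∂P = 0 := by
    simpa [covariance_eq_sub hU2 hV2, hV0] using hcov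
  rw [variance_of_integral_eq_zero hV2.aemeasurable hV0,
    ← integral_sub_sq_of_integral_mul_eq_zero hU2 hV2 horth]
  simp only [sub_sub_sub_cancel_right]

end GaussianPair

theorem brillinger_gaussian_lsq_general
    {Ω E S : Type*} [MeasurableSpace Ω] [MeasurableSpace S]
    [NormedAddCommGroup E] [NormedSpace ℝ E] [MeasurableSpace E] [BorelSpace E] {P : Measure Ω}
    {x : Ω → E} (hx : HasGaussianLaw x P) (hx0 : ∀ L : StrongDual ℝ E, ∫ ω, L (x ω) ∂P = 0)
    {ξ : Ω → S} (hξ : AEMeasurable ξ P) (hind : IndepFun x ξ P)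
    {θs : StrongDual ℝ E} (hθs : Var[fun ω ↦ θs (x ω); P] ≠ 0)
    {f : ℝ → S → ℝ} (hf : Measurable (Function.uncurry f))
    {y : Ω → ℝ} (hy : ∀ ω, y ω = f (θs (x ω)) (ξ ω)) (hy2 : MemLp y 2 P) (θ : StrongDual ℝ E) :
    let η := (∫ ω, y ω * θs (x ω) ∂P) / Var[fun ω ↦ θs (x ω); P]
    ∫ ω, (y ω - θ (x ω)) ^ 2 ∂P =
      ∫ ω, (y ω - (η • θs) (x ω)) ^ 2 ∂P + Var[fun ω ↦ (θ - η • θs) (x ω); P] :=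
  integral_sub_sq_of_hasGaussianLaw (hx.map_fun (θs.prod θ)) (hx0 θs) (hx0 θ) hθs hξ
    (hind.comp (θs.prod θ).measurable measurable_id) hf hy hy2

section StandardGaussian

variable {Ω E S : Type*} [MeasurableSpace Ω] [MeasurableSpace S] [NormedAddCommGroup E]
  [InnerProductSpace ℝ E] [FiniteDimensional ℝ E] [MeasurableSpace E] [BorelSpace E]
  {P : Measure Ω} {x : Ω → E}

theorem integral_strongDual_of_hasLaw_stdGaussian (hx : HasLaw x (stdGaussian E) P)
    (L : StrongDual ℝ E) : ∫ ω, L (x ω) ∂P = 0 :=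
  (hx.integral_comp L.continuous.aestronglyMeasurable).trans (integral_strongDual_stdGaussian L)

theorem variance_inner_of_hasLaw_stdGaussian (hx : HasLaw x (stdGaussian E) P) (v : E) :
    Var[fun ω ↦ inner ℝ v (x ω); P] = ‖v‖ ^ 2 := by
  have hv : AEMeasurable (innerSL ℝ v) (P.map x) := (innerSL ℝ v).measurable.aemeasurable
  rw [← innerSL_apply_norm (𝕜 := ℝ) v, ← variance_dual_stdGaussian, ← hx.map_eq,
    variance_map hv hx.aemeasurable]
  rfl

theorem integral_sub_inner_sq_of_hasLaw_stdGaussian (hx : HasLaw x (stdGaussian E) P)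
    {ξ : Ω → S} (hξ : AEMeasurable ξ P) (hind : IndepFun x ξ P) {θs : E} (hθs : ‖θs‖ = 1)
    {f : ℝ → S → ℝ} (hf : Measurable (Function.uncurry f))
    {y : Ω → ℝ} (hy : ∀ ω, y ω = f (inner ℝ θs (x ω)) (ξ ω)) (hy2 : MemLp y 2 P) (θ : E) :
    let η := ∫ ω, y ω * inner ℝ θs (x ω) ∂P
    ∫ ω, (y ω - inner ℝ θ (x ω)) ^ 2 ∂P =
      ∫ ω, (y ω - inner ℝ (η • θs) (x ω)) ^ 2 ∂P + ‖θ - η • θs‖ ^ 2 := by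
  intro η
  have hvar : Var[fun ω ↦ innerSL ℝ θs (x ω); P] = 1 := by
    simpa [hθs] using variance_inner_of_hasLaw_stdGaussian hx θs
  have hrisk := brillinger_gaussian_lsq_general hx.hasGaussianLaw
    (integral_strongDual_of_hasLaw_stdGaussian hx) hξ hind (hvar.trans_ne one_ne_zero)
    hf hy hy2 (innerSL ℝ θ)
  rw [hvar, div_one] at hrisk
  rw [← variance_inner_of_hasLaw_stdGaussian hx]
  simpa [η, inner_sub_left, inner_smul_left] using hrisk

end StandardGaussian

theorem hasLaw_toLp_stdGaussian {Ω ι : Type*} [MeasurableSpace Ω] [Fintype ι] {P : Measure Ω}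
    {x : Ω → ι → ℝ} (hx : HasLaw x (Measure.pi fun _ ↦ gaussianReal 0 1) P) :
    HasLaw (fun ω ↦ WithLp.toLp 2 (x ω)) (stdGaussian (EuclideanSpace ℝ ι)) P :=
  HasLaw.fun_comp ⟨by fun_prop, map_pi_eq_stdGaussian⟩ hx

/-- Brillinger's identity: for standard Gaussian measurements `x ~ N(0, I_d)`, noise `ξ`
independent of `x`, a unit vector `θ*`, and `y = f(⟨x,θ*⟩, ξ)`, the vector `η θ*` with
`η = E[y ⟨x,θ*⟩]` minimizes `θ ↦ E[(y − ⟨θ,x⟩)²]`. -/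
theorem brillinger_gaussian_lsq
    {Ω : Type*} [MeasurableSpace Ω] (P : Measure Ω) [IsProbabilityMeasure P]
    {d : ℕ} (hd : 1 ≤ d)
    (x : Ω → Fin d → ℝ) (hxmeas : Measurable x)
    (hxgauss : Measure.map x P = Measure.pi fun _ : Fin d => gaussianReal 0 1)
    (ξ : Ω → ℝ) (hξmeas : Measurable ξ)
    (hindep : IndepFun x ξ P)
    (θs : Fin d → ℝ) (hθs : ∑ j, (θs j) ^ 2 = 1)
    (f : ℝ → ℝ → ℝ) (hf : Measurable fun p : ℝ × ℝ => f p.1 p.2)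
    (y : Ω → ℝ) (hydef : ∀ ω, y ω = f (∑ j, x ω j * θs j) (ξ ω))
    (hinty : Integrable (fun ω => (y ω) ^ 2) P)
    (hintall : ∀ θ : Fin d → ℝ, Integrable (fun ω => (y ω - ∑ j, θ j * x ω j) ^ 2) P)
    (hintη : Integrable (fun ω => y ω * ∑ j, x ω j * θs j) P) :
    ∀ θ : Fin d → ℝ,
      ∫ ω, (y ω - ∑ j, ((∫ ω', y ω' * ∑ k, x ω' k * θs k ∂P) * θs j) * x ω j) ^ 2 ∂P
        ≤ ∫ ω, (y ω - ∑ j, θ j * x ω j) ^ 2 ∂P := by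
  intro θ
  have hinner (a b : Fin d → ℝ) :
      inner ℝ (WithLp.toLp 2 a) (WithLp.toLp 2 b) = ∑ j, a j * b j := by
    simp [PiLp.inner_apply, mul_comm]
  have hθs_norm : ‖WithLp.toLp 2 θs‖ = 1 := by simp [EuclideanSpace.norm_eq, hθs]
  have hlaw := hasLaw_toLp_stdGaussian ⟨hxmeas.aemeasurable, hxgauss⟩
  have hind : IndepFun (fun ω ↦ WithLp.toLp 2 (x ω)) ξ P :=
    hindep.comp (φ := WithLp.toLp 2) (by fun_prop) measurable_id
  have hymeas : Measurable y := by
    rw [funext hydef]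
    exact hf.comp (f := fun ω ↦ (∑ j, x ω j * θs j, ξ ω)) (by fun_prop)
  have hy2 : MemLp y 2 P := (memLp_two_iff_integrable_sq hymeas.aestronglyMeasurable).2 hinty
  simp only [mul_comm (x _ _)] at hydef ⊢
  have hrisk := integral_sub_inner_sq_of_hasLaw_stdGaussian hlaw hξmeas.aemeasurable hind
    hθs_norm hf (by simpa only [hinner] using hydef) hy2 (WithLp.toLp 2 θ)
  simp only [hinner, ← WithLp.toLp_smul, Pi.smul_apply, smul_eq_mul] at hrisk
  rw [hrisk]
  exact le_add_of_nonneg_right (sq_nonneg _)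

end
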